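/- There are infinitely many pairwise non-isomorphic symmetrical antitrees of diameter 4 that are Bonnet-Myers sharp, and infinitely many pairwise non-isomorphic symmetrical antitrees of diameter 6 that are Bonnet-Myers sharp: for every positive integer b, the antitrees AT(1,b,b+2,b,1) and AT(1,b,2b+3,3b+1,2b+3,b,1) are Bonnet-Myers sharp. -/

import Mathlib

open scoped Classical
open Finset

noncomputable section

/-- The degree of a vertex `x` in the graph `G`. -/
def deg {V : Type*} [Fintype V] (G : SimpleGraph V) (x : V) : ℕ :=
  (Finset.univ.filter (fun y => G.Adj x y)).card

/-- The diameter of `G`: the maximum of the combinatorial distance over all pairs of vertices. -/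
def diam {V : Type*} [Fintype V] (G : SimpleGraph V) : ℕ :=
  Finset.univ.sup (fun xy : V × V => G.dist xy.1 xy.2)

/-- The probability measure `μ_x^p` of the lazy simple random walk at `x` with idleness `p`. -/
def mu {V : Type*} [Fintype V] (G : SimpleGraph V) (p : ℝ) (x : V) : V → ℝ :=
  fun z => if z = x then p else if G.Adj x z then (1 - p) / (deg G x : ℝ) else 0

/-- The Wasserstein distance `W₁(μ₁, μ₂)` with respect to the combinatorial distance of `G`:
the infimum of the total transport cost over all transport plans from `μ₁` to `μ₂`. -/
def W1 {V : Type*} [Fintype V] (G : SimpleGraph V) (μ₁ μ₂ : V → ℝ) : ℝ :=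
  sInf {c : ℝ | ∃ π : V → V → ℝ,
    (∀ x y, 0 ≤ π x y ∧ π x y ≤ 1) ∧
    (∀ x, ∑ y, π x y = μ₁ x) ∧
    (∀ y, ∑ x, π x y = μ₂ y) ∧
    c = ∑ x, ∑ y, (G.dist x y : ℝ) * π x y}

/-- The `p`-Ollivier-Ricci curvature `κ_p(x,y) = 1 - W₁(μ_x^p, μ_y^p)`. -/
def kappa {V : Type*} [Fintype V] (G : SimpleGraph V) (p : ℝ) (x y : V) : ℝ :=
  1 - W1 G (mu G p x) (mu G p y)

/-- The Lin-Lu-Yau curvature `κ_LLY(x,y) = lim_{p→1} κ_p(x,y)/(1-p)`. -/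
def kappaLLY {V : Type*} [Fintype V] (G : SimpleGraph V) (x y : V) : ℝ :=
  Filter.limUnder (nhdsWithin 1 (Set.Iio 1)) (fun p => kappa G p x y / (1 - p))

/-- `G` is Bonnet-Myers sharp if the infimum of `κ_LLY` over the edges equals `2/diam(G)`. -/
def BMSharp {V : Type*} [Fintype V] (G : SimpleGraph V) : Prop :=
  sInf {r : ℝ | ∃ x y, G.Adj x y ∧ r = kappaLLY G x y} = 2 / (diam G : ℝ)

/-- `G` is obtained from the complete graph on its vertex set by deleting a matching
(a set of pairwise disjoint edges, encoded as a symmetric irreflexive relation in which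
every vertex has at most one partner). -/
def IsMatchingDeletionOfComplete {V : Type*} (G : SimpleGraph V) : Prop :=
  ∃ M : V → V → Prop, Symmetric M ∧ (∀ x, ¬ M x x) ∧
    (∀ x y z, M x y → M x z → y = z) ∧
    (∀ x y, G.Adj x y ↔ x ≠ y ∧ ¬ M x y)

/-- The graph `G(a,b)` on `2a+b` vertices `u_1, …, u_{2a}, v_1, …, v_b` (encoded as
`Fin (2a+b)`, with `u_i` the index `i-1` and `v_j` the index `2a+j-1`), in which two distinct
vertices are adjacent unless they form a pair `{u_{2i-1}, u_{2i}}`, i.e. `G(a,b)` is the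
complete graph `K_{2a+b}` with a matching of size `a` deleted. -/
def Gab (a b : ℕ) : SimpleGraph (Fin (2*a+b)) where
  Adj x y := x ≠ y ∧ ¬((x : ℕ) < 2*a ∧ (y : ℕ) < 2*a ∧ (x : ℕ)/2 = (y : ℕ)/2)
  symm := by
    constructor
    intro x y h
    exact ⟨h.1.symm, fun hc => h.2 ⟨hc.2.1, hc.1, hc.2.2.symm⟩⟩
  loopless := by constructor; intro x h; exact h.1 rfl

/-- The antitree `AT(a_1, …, a_N)` on the disjoint union of sets `V_1, …, V_N` with
`|V_k| = a_k` (0-indexed here: `V_k` is `Fin (a k)` for `k : Fin N`): two distinct vertices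
are adjacent iff they lie in the same set or in consecutive sets. -/
def antitree (N : ℕ) (a : Fin N → ℕ) : SimpleGraph (Σ k : Fin N, Fin (a k)) where
  Adj x y := x ≠ y ∧
    ((x.1 : ℕ) = (y.1 : ℕ) ∨ (x.1 : ℕ) + 1 = (y.1 : ℕ) ∨ (y.1 : ℕ) + 1 = (x.1 : ℕ))
  symm := by
    constructor
    intro x y h
    refine ⟨h.1.symm, ?_⟩
    rcases h.2 with h2 | h2 | h2
    · exact Or.inl h2.symm
    · exact Or.inr (Or.inr h2)
    · exact Or.inr (Or.inl h2)
  loopless := by constructor; intro x h; exact h.1 rfl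


lemma W1_eq {V : Type*} [Fintype V] (G : SimpleGraph V) (μ ν : V → ℝ) (f : V → ℝ)
    (hf : ∀ u v, f v - f u ≤ (G.dist u v : ℝ)) (π : V → V → ℝ)
    (h0 : ∀ u v, 0 ≤ π u v) (hr : ∀ u, ∑ v, π u v = μ u) (hc : ∀ v, ∑ u, π u v = ν v)
    (h1 : ∀ u, μ u ≤ 1) (hd : ∀ u v, π u v ≠ 0 → (G.dist u v : ℝ) = f v - f u) :
    W1 G μ ν = ∑ v, f v * ν v - ∑ u, f u * μ u := by
  have key : ∀ π : V → V → ℝ, (∀ u, ∑ v, π u v = μ u) → (∀ v, ∑ u, π u v = ν v) →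
      ∑ u, ∑ v, (f v - f u) * π u v = ∑ v, f v * ν v - ∑ u, f u * μ u := by
    intro π hr hc
    simp only [sub_mul, Finset.sum_sub_distrib]
    congr 1
    · rw [Finset.sum_comm]
      refine Finset.sum_congr rfl fun v _ => ?_
      rw [← Finset.mul_sum, hc]
    · refine Finset.sum_congr rfl fun v _ => ?_
      rw [← Finset.mul_sum, hr]
  refine IsLeast.csInf_eq ⟨⟨π, fun u v => ⟨h0 u v, ?_⟩, hr, hc, ?_⟩, ?_⟩
  · refine le_trans ?_ (h1 u)
    rw [← hr u]
    exact Finset.single_le_sum (f := fun v => π u v) (fun i _ => h0 u i) (Finset.mem_univ v)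
  · rw [← key π hr hc]
    refine Finset.sum_congr rfl fun u _ => Finset.sum_congr rfl fun v _ => ?_
    by_cases h : π u v = 0
    · simp [h]
    · rw [hd u v h]
  · rintro c ⟨ρ, hρ, hr', hc', rfl⟩
    rw [← key ρ hr' hc']
    refine Finset.sum_le_sum fun u _ => Finset.sum_le_sum fun v _ => ?_
    exact mul_le_mul_of_nonneg_right (hf u v) (hρ u v).1

lemma W1_comm {V : Type*} [Fintype V] (G : SimpleGraph V) (μ ν : V → ℝ) :
    W1 G μ ν = W1 G ν μ := by
  unfold W1
  congr 1
  ext c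
  constructor
  all_goals
    rintro ⟨π, h1, h2, h3, h4⟩
    refine ⟨fun u v => π v u, fun u v => h1 v u, h3, h2, ?_⟩
    rw [h4, Finset.sum_comm]
    refine Finset.sum_congr rfl fun u _ => Finset.sum_congr rfl fun v _ => ?_
    rw [SimpleGraph.dist_comm]

lemma deg_pos_of_adj {V : Type*} [Fintype V] (G : SimpleGraph V) {x y : V} (h : G.Adj x y) :
    0 < deg G x := Finset.card_pos.mpr ⟨y, by simp [h]⟩

lemma mu_le_one {V : Type*} [Fintype V] (G : SimpleGraph V) {x y : V} (h : G.Adj x y) (p : ℝ)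
    (h0 : 0 ≤ p) (h1 : p ≤ 1) (u : V) : mu G p x u ≤ 1 := by
  have hd : (1:ℝ) ≤ deg G x := by exact_mod_cast deg_pos_of_adj G h
  unfold mu
  split_ifs
  · exact h1
  · rw [div_le_one (by linarith)]; linarith
  · norm_num

/-- the sum of a function against the measure -/
lemma sum_mu {V : Type*} [Fintype V] (G : SimpleGraph V) {x y : V} (h : G.Adj x y) (p : ℝ)
    (f : V → ℝ) : ∑ z, f z * mu G p x z = f x + (1 - p) *
      ((∑ z, if G.Adj x z then f z - f x else 0) / (deg G x : ℝ)) := by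
  have hd : (0:ℝ) < deg G x := by exact_mod_cast deg_pos_of_adj G h
  have e : ∀ z, f z * mu G p x z = (if z = x then p * f x else 0) + 
      (1 - p) / (deg G x : ℝ) * (if G.Adj x z then f z - f x else 0) +
      (1 - p) / (deg G x : ℝ) * f x * (if G.Adj x z then 1 else 0) := by
    intro z
    unfold mu
    by_cases hz : z = x
    · subst hz; simp; ring
    · by_cases ha : G.Adj x z
      · simp [hz, ha]; ring
      · simp [hz, ha]
  have hdeg : ∑ z, (if G.Adj x z then (1:ℝ) else 0) = deg G x := by
    simp [deg]
  simp only [e, Finset.sum_add_distrib, ← Finset.mul_sum, hdeg]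
  simp only [Finset.sum_ite_eq', Finset.mem_univ, if_true]
  field_simp
  ring

lemma kappaLLY_eq {V : Type*} [Fintype V] (G : SimpleGraph V) (x y : V) (c : ℝ)
    (h : ∀ p : ℝ, 2/3 ≤ p → p < 1 → kappa G p x y = c * (1 - p)) : kappaLLY G x y = c := by
  apply Filter.Tendsto.limUnder_eq
  refine Filter.Tendsto.congr' ?_ tendsto_const_nhds
  have : Set.Ioo (2/3:ℝ) 1 ∈ nhdsWithin (1:ℝ) (Set.Iio 1) :=
    Ioo_mem_nhdsLT (by norm_num)
  filter_upwards [this] with p hp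
  rw [h p hp.1.le hp.2, mul_div_assoc, div_self (by linarith [hp.2]), mul_one]

lemma kappa_twin {V : Type*} [Fintype V] (G : SimpleGraph V) (hG : G.Connected) (x y : V)
    (hxy : G.Adj x y) (ht : ∀ z, z ≠ x → z ≠ y → (G.Adj x z ↔ G.Adj y z))
    (hdeg : deg G x = deg G y) : 1 ≤ kappaLLY G x y := by
  have hd : (1:ℝ) ≤ deg G x := by exact_mod_cast deg_pos_of_adj G hxy
  have hne : x ≠ y := hxy.ne
  have : kappaLLY G x y = 1 + 1 / deg G x := by
    apply kappaLLY_eq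
    intro p hp hp1
    set α : ℝ := (1 - p) / deg G x with hα
    have hα0 : 0 ≤ α := div_nonneg (by linarith) (by linarith)
    have hα1 : α ≤ 1 - p := div_le_self (by linarith) hd
    have hW := W1_eq G (mu G p x) (mu G p y) (fun z => if z = y then 1 else 0) ?_
      (fun u v => (if u = v then (if u = x then α else mu G p x u) else 0)
        + (if u = x then (if v = y then p - α else 0) else 0)) ?_ ?_ ?_ 
        (fun u => mu_le_one G hxy p (by linarith) hp1.le u) ?_
    · unfold kappa
      rw [hW]
      simp only [ite_mul, one_mul, zero_mul, Finset.sum_ite_eq', Finset.mem_univ, if_true]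
      simp [mu, hne.symm, hxy, hα]
      field_simp
      ring
    · intro u v
      by_cases huv : u = v
      · subst huv; simp
      · have h1 : (1:ℝ) ≤ G.dist u v := by
          exact_mod_cast hG.pos_dist_of_ne huv
        split_ifs <;> linarith
    · intro u v
      have : 0 ≤ mu G p x u := by
        unfold mu
        split_ifs <;> linarith
      apply add_nonneg <;> split_ifs <;> linarith
    · intro u
      rw [Finset.sum_add_distrib]
      by_cases hu : u = x
      · simp [hu, mu]
      · simp [hu]
    · intro v
      rw [Finset.sum_add_distrib]
      by_cases hv : v = x
      · subst hv; simp [mu, hne, hxy.symm, hα, hdeg]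
      · by_cases hv' : v = y
        · subst hv'; simp [mu, hv, hxy, hα]
        · simp [hv, hv', mu, ht v hv hv', hdeg]
    · intro u v h
      by_cases huv : u = v
      · subst huv; simp
      · by_cases hu : u = x
        · by_cases hv : v = y
          · subst hu; subst hv; simp [hne, SimpleGraph.dist_eq_one_iff_adj.mpr hxy]
          · simp [huv, hv] at h
        · simp [huv, hu] at h
  rw [this]
  have : (0:ℝ) ≤ 1 / deg G x := by positivity
  linarith

lemma radial_aux {V : Type*} [Fintype V] (G : SimpleGraph V) (f : V → ℤ)
    (hadj : ∀ u v, G.Adj u v ↔ u ≠ v ∧ |f u - f v| ≤ 1)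
    (hdist : ∀ u v, f u < f v → (G.dist u v : ℤ) = f v - f u)
    (x y : V) (hxy : f y = f x + 1) (hle : deg G x ≤ deg G y) (p : ℝ) (hp : 2/3 ≤ p)
    (hp1 : p < 1) :
    W1 G (mu G p x) (mu G p y) = ∑ v, (f v : ℝ) * mu G p y v - ∑ u, (f u : ℝ) * mu G p x u := by
  have hne : x ≠ y := by rintro rfl; omega
  have hA : G.Adj x y := by rw [hadj]; refine ⟨hne, ?_⟩; rw [abs_le]; omega
  obtain ⟨a, b, c, d, table⟩ : ∃ a b c d : V → ℝ, ∀ z,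
      (z ≠ x ∧ z ≠ y ∧ a z = 1 ∧ b z = 0 ∧ c z = 0 ∧ d z = 0 ∧ G.Adj x z ∧ ¬ G.Adj y z
        ∧ f z = f x - 1) ∨
      (z = x ∧ z ≠ y ∧ a z = 0 ∧ b z = 0 ∧ c z = 0 ∧ d z = 0 ∧ ¬ G.Adj x z ∧ G.Adj y z
        ∧ f z = f x) ∨
      (z ≠ x ∧ z ≠ y ∧ a z = 0 ∧ b z = 1 ∧ c z = 0 ∧ d z = 0 ∧ G.Adj x z ∧ G.Adj y z
        ∧ f z = f x) ∨
      (z ≠ x ∧ z = y ∧ a z = 0 ∧ b z = 0 ∧ c z = 0 ∧ d z = 0 ∧ G.Adj x z ∧ ¬ G.Adj y z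
        ∧ f z = f x + 1) ∨
      (z ≠ x ∧ z ≠ y ∧ a z = 0 ∧ b z = 0 ∧ c z = 1 ∧ d z = 0 ∧ G.Adj x z ∧ G.Adj y z
        ∧ f z = f x + 1) ∨
      (z ≠ x ∧ z ≠ y ∧ a z = 0 ∧ b z = 0 ∧ c z = 0 ∧ d z = 1 ∧ ¬ G.Adj x z ∧ G.Adj y z
        ∧ f z = f x + 2) ∨
      (z ≠ x ∧ z ≠ y ∧ a z = 0 ∧ b z = 0 ∧ c z = 0 ∧ d z = 0 ∧ ¬ G.Adj x z ∧ ¬ G.Adj y z) := by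
    refine ⟨fun z => if f z = f x - 1 then 1 else 0, fun z => if f z = f x ∧ z ≠ x then 1 else 0,
      fun z => if f z = f x + 1 ∧ z ≠ y then 1 else 0, fun z => if f z = f x + 2 then 1 else 0, ?_⟩
    intro z
    by_cases h1 : z = x
    · subst h1
      right; left
      simp [hne, hadj, hne.symm, hxy]; try omega
    by_cases h2 : z = y
    · subst h2
      right; right; right; left
      simp [h1, hne, hadj, hxy]; try omega
    have h1' : x ≠ z := fun h => h1 h.symm
    have h2' : y ≠ z := fun h => h2 h.symm
    by_cases k1 : f z = f x - 1
    · left; simp [h1, h2, h1', h2', k1, hadj, hxy, abs_le]; try omega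
    by_cases k2 : f z = f x
    · right; right; left; simp [h1, h2, h1', h2', k2, hadj, hxy, abs_le]; try omega
    by_cases k3 : f z = f x + 1
    · right; right; right; right; left
      simp [h1, h2, h1', h2', k3, hadj, hxy, abs_le]; try omega
    by_cases k4 : f z = f x + 2
    · right; right; right; right; right; left
      simp [h1, h2, h1', h2', k4, hadj, hxy, abs_le]; try omega
    right; right; right; right; right; right
    simp [h1, h2, h1', h2', k1, k2, k3, k4, hadj, hxy, abs_le]; omega
  have hX : a x = 0 ∧ b x = 0 ∧ c x = 0 ∧ d x = 0 := by
    rcases table x with h | h | h | h | h | h | h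
    · exact absurd rfl h.1
    · tauto
    all_goals exact absurd rfl h.1
  have hY : a y = 0 ∧ b y = 0 ∧ c y = 0 ∧ d y = 0 := by
    rcases table y with h | h | h | h | h | h | h
    · exact absurd rfl h.2.1
    · exact absurd rfl h.2.1
    · exact absurd rfl h.2.1
    · tauto
    all_goals exact absurd rfl h.2.1
  have nn : ∀ z, 0 ≤ a z ∧ 0 ≤ b z ∧ 0 ≤ c z ∧ 0 ≤ d z := by
    intro z
    rcases table z with h | h | h | h | h | h | h <;> simp [h, hX, hY]
  set nA := ∑ z, a z with hnA
  set nB := ∑ z, b z with hnB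
  set nC := ∑ z, c z with hnC
  set nD := ∑ z, d z with hnD
  have nA0 : 0 ≤ nA := Finset.sum_nonneg fun z _ => (nn z).1
  have nB0 : 0 ≤ nB := Finset.sum_nonneg fun z _ => (nn z).2.1
  have nC0 : 0 ≤ nC := Finset.sum_nonneg fun z _ => (nn z).2.2.1
  have nD0 : 0 ≤ nD := Finset.sum_nonneg fun z _ => (nn z).2.2.2
  have dx : (deg G x : ℝ) = nA + nB + nC + 1 := by
    have h1 : ∑ z, (if G.Adj x z then (1:ℝ) else 0) = deg G x := by simp [deg]
    have h2 : ∑ z, (if z = y then (1:ℝ) else 0) = 1 := by simp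
    rw [← h1, ← h2, hnA, hnB, hnC, ← Finset.sum_add_distrib, ← Finset.sum_add_distrib,
      ← Finset.sum_add_distrib]
    refine Finset.sum_congr rfl fun z _ => ?_
    rcases table z with h | h | h | h | h | h | h <;> simp [h, hX, hY, hA, hA.symm, hne]
  have dy : (deg G y : ℝ) = nB + nC + nD + 1 := by
    have h1 : ∑ z, (if G.Adj y z then (1:ℝ) else 0) = deg G y := by simp [deg]
    have h2 : ∑ z, (if z = x then (1:ℝ) else 0) = 1 := by simp
    rw [← h1, ← h2, hnB, hnC, hnD, ← Finset.sum_add_distrib, ← Finset.sum_add_distrib,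
      ← Finset.sum_add_distrib]
    refine Finset.sum_congr rfl fun z _ => ?_
    rcases table z with h | h | h | h | h | h | h <;> simp [h, hX, hY, hA, hA.symm, hne.symm]
  have hle' : (deg G x : ℝ) ≤ deg G y := by exact_mod_cast hle
  have hAD : nA ≤ nD := by rw [dx, dy] at hle'; linarith
  set α := (1 - p) / (deg G x : ℝ) with hα
  set β := (1 - p) / (deg G y : ℝ) with hβ
  have dx1 : (0:ℝ) < deg G x := by rw [dx]; linarith
  have dy1 : (0:ℝ) < deg G y := by rw [dy]; linarith
  have eα : α * (nA + nB + nC + 1) = 1 - p := by rw [← dx, hα]; field_simp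
  have eβ : β * (nB + nC + nD + 1) = 1 - p := by rw [← dy, hβ]; field_simp
  have hβ0 : 0 ≤ β := div_nonneg (by linarith) dy1.le
  have hα0 : 0 ≤ α := div_nonneg (by linarith) dx1.le
  have hβα : β ≤ α := div_le_div_of_nonneg_left (by linarith) dx1 hle'
  clear_value α β
  obtain ⟨k, hk0, hk, hkC⟩ : ∃ k : ℝ, 0 ≤ k ∧ k * nD = α - β ∧ k * nC ≤ β := by
    rcases eq_or_lt_of_le nD0 with h | h
    · have hA0 : nA = 0 := by linarith
      have : α = β := by
        have h3 : (α - β) * (nB + nC + 1) = 0 := by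
          rw [hA0] at eα; rw [← h] at eβ; linarith
        rcases mul_eq_zero.mp h3 with h4 | h4 <;> linarith
      exact ⟨0, le_rfl, by rw [this]; ring, by simpa using hβ0⟩
    · refine ⟨(α - β) / nD, div_nonneg (by linarith) h.le, by field_simp, ?_⟩
      rw [div_mul_eq_mul_div, div_le_iff₀ h]
      nlinarith [mul_nonneg hα0 nA0, mul_nonneg hα0 nB0, mul_nonneg (sub_nonneg.2 hβα) nB0]
  set r := β - k * nC with hr
  have hr0 : 0 ≤ r := by linarith
  set s := p - β - r * nD with hs
  have hs0 : 0 ≤ s := by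
    have h1 : r * nD ≤ β * nD := mul_le_mul_of_nonneg_right (by
      have := mul_nonneg hk0 nC0; linarith) nD0
    have := mul_nonneg hβ0 nB0
    have := mul_nonneg hβ0 nC0
    have : β * nD + β ≤ 1 - p := by linarith
    linarith
  have hey : α + (α * nA + (α - β) * nB + s) = p := by
    have : r * nD = β * nD - (α - β) * nC := by rw [hr, ← hk]; ring
    rw [hs, this]; linarith
  clear_value r s
  refine W1_eq G (mu G p x) (mu G p y) (fun z => (f z : ℝ)) ?_
    (fun u v => (if u = v then β * b u + β * c u + (if u = x then β else 0)
        + (if u = y then α else 0) else 0)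
      + k * c u * d v + (if u = x then r else 0) * d v
      + (if v = y then (α * a u + (α - β) * b u + (if u = x then s else 0)) else 0))
    ?_ ?_ ?_ (fun u => mu_le_one G hA p (by linarith) hp1.le u) ?_
  · intro u v
    by_cases h : f u < f v
    · have := hdist u v h
      have h2 : ((G.dist u v : ℤ) : ℝ) = ((f v - f u : ℤ) : ℝ) := by rw [this]
      push_cast at h2
      exact h2.ge
    · have h3 : (f v : ℝ) ≤ f u := by exact_mod_cast not_lt.mp h
      have : (0:ℝ) ≤ G.dist u v := by positivity
      linarith
  · intro u v
    obtain ⟨ha, hb, hc, hd⟩ := nn u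
    obtain ⟨-, -, -, hd'⟩ := nn v
    have hαβ : 0 ≤ α - β := by linarith
    have i1 : (0:ℝ) ≤ if u = x then β else 0 := by split_ifs <;> linarith
    have i2 : (0:ℝ) ≤ if u = y then α else 0 := by split_ifs <;> linarith
    have i3 : (0:ℝ) ≤ if u = x then r else 0 := by split_ifs <;> linarith
    have i4 : (0:ℝ) ≤ if u = x then s else 0 := by split_ifs <;> linarith
    have j1 : (0:ℝ) ≤ β * b u + β * c u + (if u = x then β else 0)
        + (if u = y then α else 0) := by positivity
    have j2 : (0:ℝ) ≤ (α * a u + (α - β) * b u + (if u = x then s else 0)) := by positivity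
    have j3 : 0 ≤ k * c u * d v + (if u = x then r else 0) * d v := by positivity
    have t1 : (0:ℝ) ≤ (if u = v then β * b u + β * c u + (if u = x then β else 0)
        + (if u = y then α else 0) else 0) := by
      by_cases h : u = v
      · rw [if_pos h]; exact j1
      · rw [if_neg h]
    have t2 : (0:ℝ) ≤ (if v = y then (α * a u + (α - β) * b u + (if u = x then s else 0))
        else 0) := by
      by_cases h : v = y
      · rw [if_pos h]; exact j2
      · rw [if_neg h]
    linarith
  · intro u
    simp only [Finset.sum_add_distrib, ← Finset.mul_sum, Finset.sum_ite_eq, Finset.sum_ite_eq',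
      Finset.mem_univ, if_true, ← hnD]
    unfold mu
    rw [← hα]
    rcases table u with h | h | h | h | h | h | h
    · simp [h, hX, hY]
    · simp [h, hX, hY, hA, hA.symm, hne]; linarith
    · simp [h, hX, hY]
    · simp [h, hX, hY, hA, hA.symm, hne.symm, hA]
    · simp [h, hX, hY]; linarith
    · simp [h, hX, hY]
    · simp [h, hX, hY]
  · intro v
    have e1 : ∑ u, (if v = y then (α * a u + (α - β) * b u + (if u = x then s else 0)) else 0)
        = if v = y then (α * nA + (α - β) * nB + s) else 0 := by
      split_ifs
      · simp only [Finset.sum_add_distrib, ← Finset.mul_sum, Finset.sum_ite_eq', Finset.mem_univ,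
          if_true, ← hnA, ← hnB]
      · simp
    simp only [Finset.sum_add_distrib, e1, ← Finset.mul_sum, ← Finset.sum_mul, Finset.sum_ite_eq,
      Finset.sum_ite_eq', Finset.mem_univ, if_true, ← hnC]
    unfold mu
    rw [← hβ]
    rcases table v with h | h | h | h | h | h | h
    · simp [h, hX, hY]
    · simp [h, hX, hY, hA, hA.symm, hne, hA.symm]
    · simp [h, hX, hY]
    · simp [h, hX, hY, hA, hA.symm, hne.symm]; linarith
    · simp [h, hX, hY]
    · simp [h, hX, hY]; linarith
    · simp [h, hX, hY]
  · intro u v h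
    by_cases hlt : f u < f v
    · have := hdist u v hlt
      have h2 : ((G.dist u v : ℤ) : ℝ) = ((f v - f u : ℤ) : ℝ) := by rw [this]
      push_cast at h2
      exact h2
    · by_cases huv : u = v
      · subst huv; simp
      · exfalso
        apply h
        rcases table u with h | h | h | h | h | h | h <;>
        rcases table v with h' | h' | h' | h' | h' | h' | h' <;>
        first
        | (exfalso; omega)
        | (exfalso; exact huv (h.1.trans h'.1.symm))
        | (exfalso; exact huv (h.2.1.trans h'.2.1.symm))
        | (simp [h, h', huv, hX, hY, hne, hne.symm]; done)
        | (rw [if_neg huv]; simp [h, h', hX, hY, hne, hne.symm])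

/-- the drift of the layer function -/
def drift {V : Type*} [Fintype V] (G : SimpleGraph V) (f : V → ℤ) (x : V) : ℝ :=
  (∑ z, if G.Adj x z then (f z : ℝ) - f x else 0) / (deg G x : ℝ)

lemma radial {V : Type*} [Fintype V] (G : SimpleGraph V) (f : V → ℤ)
    (hadj : ∀ u v, G.Adj u v ↔ u ≠ v ∧ |f u - f v| ≤ 1)
    (hdist : ∀ u v, f u < f v → (G.dist u v : ℤ) = f v - f u)
    (x y : V) (hxy : f y = f x + 1) : kappaLLY G x y = drift G f x - drift G f y := by
  have hne : x ≠ y := by rintro rfl; omega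
  have hA : G.Adj x y := by rw [hadj]; refine ⟨hne, ?_⟩; rw [abs_le]; omega
  apply kappaLLY_eq
  intro p hp hp1
  have key : W1 G (mu G p x) (mu G p y)
      = ∑ v, (f v : ℝ) * mu G p y v - ∑ u, (f u : ℝ) * mu G p x u := by
    rcases le_total (deg G x) (deg G y) with hle | hle
    · exact radial_aux G f hadj hdist x y hxy hle p hp hp1
    · rw [W1_comm, radial_aux G (fun z => - f z) ?_ ?_ y x (by omega) hle p hp hp1]
      · simp only [Int.cast_neg, neg_mul, Finset.sum_neg_distrib]; ring
      · intro u v; rw [hadj, show - f u - - f v = -(f u - f v) by ring, abs_neg]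
      · intro u v h
        rw [SimpleGraph.dist_comm, hdist v u (by omega)]; ring
  unfold kappa
  rw [key, sum_mu G hA, sum_mu G hA.symm, hxy]
  unfold drift
  rw [hxy]
  push_cast
  ring

/-- the layer of a vertex -/
def lay {N : ℕ} {a : Fin N → ℕ} (z : Σ k : Fin N, Fin (a k)) : ℤ := ((z.1 : ℕ) : ℤ)

lemma at_adj {N : ℕ} {a : Fin N → ℕ} (u v : Σ k : Fin N, Fin (a k)) :
    (antitree N a).Adj u v ↔ u ≠ v ∧ |lay u - lay v| ≤ 1 := by
  show (_ ∧ _) ↔ _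
  unfold lay
  rw [abs_le]
  apply and_congr_right
  intro _
  omega

lemma at_walk {N : ℕ} {a : Fin N → ℕ} (ha : ∀ k, 0 < a k) (n : ℕ) :
    ∀ u v : Σ k : Fin N, Fin (a k), lay v = lay u + n + 1 →
      ∃ w : (antitree N a).Walk u v, w.length = n + 1 := by
  induction n with
  | zero =>
    intro u v h
    have : (antitree N a).Adj u v := by
      rw [at_adj]
      refine ⟨by rintro rfl; simp at h, ?_⟩
      rw [abs_le]; push_cast at h; omega
    exact ⟨this.toWalk, by simp⟩
  | succ n ih =>
    intro u v h
    have hlt : (u.1 : ℕ) + 1 < N := by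
      have := v.1.2
      unfold lay at h; push_cast at h; omega
    let w : Σ k : Fin N, Fin (a k) := ⟨⟨(u.1 : ℕ) + 1, hlt⟩, ⟨0, ha _⟩⟩
    have hw : lay w = lay u + 1 := by simp [lay, w]
    have h1 : (antitree N a).Adj u w := by
      rw [at_adj]
      refine ⟨by intro hh; rw [← hh] at hw; omega, ?_⟩
      rw [abs_le]; omega
    obtain ⟨q, hq⟩ := ih w v (by push_cast at h; omega)
    exact ⟨SimpleGraph.Walk.cons h1 q, by simp [hq]⟩

lemma at_walk_le {N : ℕ} {a : Fin N → ℕ} {u v : Σ k : Fin N, Fin (a k)}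
    (w : (antitree N a).Walk u v) : lay v - lay u ≤ w.length := by
  induction w with
  | nil => simp
  | cons h q ih =>
    rw [at_adj, abs_le] at h
    simp only [SimpleGraph.Walk.length_cons]
    push_cast
    omega

lemma at_dist {N : ℕ} {a : Fin N → ℕ} (ha : ∀ k, 0 < a k) (u v : Σ k : Fin N, Fin (a k))
    (h : lay u < lay v) : ((antitree N a).dist u v : ℤ) = lay v - lay u := by
  obtain ⟨n, hn⟩ : ∃ n : ℕ, lay v = lay u + n + 1 := ⟨(lay v - lay u - 1).toNat, by omega⟩
  obtain ⟨w, hw⟩ := at_walk ha n u v hn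
  have h1 := SimpleGraph.dist_le w
  obtain ⟨q, hq⟩ := w.reachable.exists_walk_length_eq_dist
  have h2 := at_walk_le q
  omega

lemma at_conn {N : ℕ} {a : Fin N → ℕ} (hN : 0 < N) (ha : ∀ k, 0 < a k) :
    (antitree N a).Connected := by
  haveI : Nonempty (Σ k : Fin N, Fin (a k)) := ⟨⟨⟨0, hN⟩, ⟨0, ha _⟩⟩⟩
  refine SimpleGraph.Connected.mk ?_
  intro u v
  rcases lt_trichotomy (lay u) (lay v) with h | h | h
  · obtain ⟨n, hn⟩ : ∃ n : ℕ, lay v = lay u + n + 1 := ⟨(lay v - lay u - 1).toNat, by omega⟩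
    obtain ⟨w, hw⟩ := at_walk ha n u v hn
    exact w.reachable
  · by_cases huv : u = v
    · rw [huv]
    · apply SimpleGraph.Adj.reachable
      rw [at_adj]
      exact ⟨huv, by rw [h]; simp⟩
  · obtain ⟨n, hn⟩ : ∃ n : ℕ, lay u = lay v + n + 1 := ⟨(lay u - lay v - 1).toNat, by omega⟩
    obtain ⟨w, hw⟩ := at_walk ha n v u hn
    exact w.reachable.symm

lemma at_diam {M : ℕ} {a : Fin (M+2) → ℕ} (ha : ∀ k, 0 < a k) :
    diam (antitree (M+2) a) = M + 1 := by
  apply le_antisymm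
  · apply Finset.sup_le
    rintro ⟨u, v⟩ -
    have hu := u.1.2
    have hv := v.1.2
    rcases lt_trichotomy (lay u) (lay v) with h | h | h
    · have := at_dist ha u v h
      simp only; unfold lay at *; omega
    · by_cases huv : u = v
      · simp [huv]
      · have : (antitree (M+2) a).Adj u v := by
          rw [at_adj]
          exact ⟨huv, by rw [h]; simp⟩
        simp [SimpleGraph.dist_eq_one_iff_adj.mpr this]
    · have := at_dist ha v u h
      rw [SimpleGraph.dist_comm] at this
      simp only; unfold lay at *; omega
  · let u : Σ k : Fin (M+2), Fin (a k) := ⟨0, ⟨0, ha _⟩⟩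
    let v : Σ k : Fin (M+2), Fin (a k) := ⟨Fin.last _, ⟨0, ha _⟩⟩
    have h := at_dist ha u v (by simp [lay, u, v])
    have h2 : (antitree (M+2) a).dist u v = M + 1 := by
      simp [lay, u, v] at h; simp only [u, v]; omega
    rw [← h2]
    exact Finset.le_sup (f := fun xy : (Σ k : Fin (M+2), Fin (a k)) × (Σ k : Fin (M+2), Fin (a k)) =>
      (antitree (M+2) a).dist xy.1 xy.2) (Finset.mem_univ (u, v))

/-- layer version of the degree -/
def Ldeg {N : ℕ} (a : Fin N → ℕ) (i : Fin N) : ℝ :=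
  ∑ k : Fin N, (a k : ℝ) * (if (k : ℕ) ≤ i + 1 ∧ (i : ℕ) ≤ k + 1 then 1 else 0) - 1

/-- layer version of the drift numerator -/
def Lnum {N : ℕ} (a : Fin N → ℕ) (i : Fin N) : ℝ :=
  ∑ k : Fin N, (a k : ℝ) * (if (k : ℕ) ≤ i + 1 ∧ (i : ℕ) ≤ k + 1 then (k : ℝ) - i else 0)

lemma at_deg {N : ℕ} {a : Fin N → ℕ} (x : Σ k : Fin N, Fin (a k)) :
    (deg (antitree N a) x : ℝ) = Ldeg a x.1 := by
  have h1 : (deg (antitree N a) x : ℝ) = ∑ z, (if (antitree N a).Adj x z then (1:ℝ) else 0) := by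
    simp [deg]
  have h2 : ∑ z, (if z = x then (1:ℝ) else 0) = 1 := by simp
  have h3 : ∀ z : (Σ k : Fin N, Fin (a k)), (if (antitree N a).Adj x z then (1:ℝ) else 0) =
      (if (z.1 : ℕ) ≤ x.1 + 1 ∧ (x.1 : ℕ) ≤ z.1 + 1 then 1 else 0) - (if z = x then (1:ℝ) else 0) := by
    intro z
    by_cases hz : z = x
    · subst hz; simp
    · have : (antitree N a).Adj x z ↔ ((z.1 : ℕ) ≤ x.1 + 1 ∧ (x.1 : ℕ) ≤ z.1 + 1) := by
        rw [at_adj, abs_le]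
        have : x ≠ z := fun h => hz h.symm
        simp only [this, ne_eq, not_false_eq_true, true_and, lay]
        omega
      simp only [this, hz, if_false, sub_zero]
  rw [h1, Finset.sum_congr rfl (fun z _ => h3 z), Finset.sum_sub_distrib, h2, Fintype.sum_sigma]
  unfold Ldeg
  congr 1
  refine Finset.sum_congr rfl fun k _ => ?_
  by_cases hk : (k : ℕ) ≤ x.1 + 1 ∧ (x.1 : ℕ) ≤ k + 1
  · simp only [hk, and_self, if_true]; simp
  · simp only [hk, if_false]; simp

lemma at_drift {N : ℕ} {a : Fin N → ℕ} (x : Σ k : Fin N, Fin (a k)) :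
    drift (antitree N a) lay x = Lnum a x.1 / Ldeg a x.1 := by
  unfold drift
  rw [at_deg]
  congr 1
  have h3 : ∀ z : (Σ k : Fin N, Fin (a k)),
      (if (antitree N a).Adj x z then (lay z : ℝ) - lay x else 0) =
      (if (z.1 : ℕ) ≤ x.1 + 1 ∧ (x.1 : ℕ) ≤ z.1 + 1 then ((z.1 : ℕ) : ℝ) - (x.1 : ℕ) else 0) := by
    intro z
    by_cases hz : z = x
    · subst hz; simp
    · have : (antitree N a).Adj x z ↔ ((z.1 : ℕ) ≤ x.1 + 1 ∧ (x.1 : ℕ) ≤ z.1 + 1) := by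
        rw [at_adj, abs_le]
        have : x ≠ z := fun h => hz h.symm
        simp only [this, ne_eq, not_false_eq_true, true_and, lay]
        omega
      simp only [this, lay, Int.cast_natCast]
  rw [Finset.sum_congr rfl (fun z _ => h3 z), Fintype.sum_sigma]
  unfold Lnum
  simp only [Finset.sum_const, Finset.card_univ, Fintype.card_fin, nsmul_eq_mul]

lemma kappaLLY_comm {V : Type*} [Fintype V] (G : SimpleGraph V) (x y : V) :
    kappaLLY G x y = kappaLLY G y x := by
  unfold kappaLLY kappa
  simp only [W1_comm G (mu G _ x) (mu G _ y)]

lemma at_sharp {M : ℕ} {a : Fin (M+2) → ℕ} (ha : ∀ k, 0 < a k) (hM : 1 ≤ M)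
    (h : ∀ i j : Fin (M+2), (i : ℕ) + 1 = j →
      Lnum a i / Ldeg a i - Lnum a j / Ldeg a j = 2 / ((M + 1 : ℕ) : ℝ)) :
    BMSharp (antitree (M+2) a) := by
  unfold BMSharp
  rw [at_diam ha]
  have rad : ∀ x y : (Σ k : Fin (M+2), Fin (a k)), (x.1 : ℕ) + 1 = y.1 →
      kappaLLY (antitree (M+2) a) x y = 2 / ((M + 1 : ℕ) : ℝ) := by
    intro x y hxy
    rw [radial (antitree (M+2) a) lay at_adj (at_dist ha) x y (by unfold lay; omega), at_drift,
      at_drift, h _ _ hxy]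
  refine IsLeast.csInf_eq ⟨?_, ?_⟩
  · let u : Σ k : Fin (M+2), Fin (a k) := ⟨0, ⟨0, ha _⟩⟩
    let v : Σ k : Fin (M+2), Fin (a k) := ⟨1, ⟨0, ha _⟩⟩
    have huv : (u.1 : ℕ) + 1 = v.1 := by simp [u, v]
    refine ⟨u, v, ?_, (rad u v huv).symm⟩
    rw [at_adj, abs_le]
    refine ⟨by intro hh; rw [hh] at huv; omega, ?_⟩
    unfold lay; omega
  · rintro r ⟨x, y, hxy, rfl⟩
    rcases hxy.2 with e | e | e
    · have h1 : 1 ≤ kappaLLY (antitree (M+2) a) x y := by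
        have e' : lay x = lay y := by unfold lay; omega
        apply kappa_twin _ (at_conn (by omega) ha) x y hxy
        · intro z h1 h2
          rw [at_adj, at_adj, e']
          have h1' : x ≠ z := fun h => h1 h.symm
          have h2' : y ≠ z := fun h => h2 h.symm
          simp [h1', h2']
        · have : (deg (antitree (M+2) a) x : ℝ) = deg (antitree (M+2) a) y := by
            rw [at_deg, at_deg, Fin.ext e]
          exact_mod_cast this
      refine le_trans ?_ h1
      rw [div_le_one (by positivity)]
      exact_mod_cast (by omega : 2 ≤ M + 1)
    · rw [rad x y e]
    · rw [kappaLLY_comm, rad y x e]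

theorem stmt14 :
    (∀ b : ℕ, 0 < b →
      BMSharp (antitree 5 ![1, b, b+2, b, 1]) ∧
      BMSharp (antitree 7 ![1, b, 2*b+3, 3*b+1, 2*b+3, b, 1])) ∧
    (∀ b b' : ℕ, 0 < b → 0 < b' → b ≠ b' →
      IsEmpty (antitree 5 ![1, b, b+2, b, 1] ≃g antitree 5 ![1, b', b'+2, b', 1]) ∧
      IsEmpty (antitree 7 ![1, b, 2*b+3, 3*b+1, 2*b+3, b, 1] ≃g
        antitree 7 ![1, b', 2*b'+3, 3*b'+1, 2*b'+3, b', 1])) := by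
  refine ⟨fun b hb => ⟨?_, ?_⟩, fun b b' _ _ hne => ⟨⟨fun e => hne ?_⟩, ⟨fun e => hne ?_⟩⟩⟩
  · have hb' : (0:ℝ) < b := by exact_mod_cast hb
    have ha : ∀ k : Fin 5, 0 < (![1, b, b+2, b, 1] : Fin 5 → ℕ) k := by
      intro k; fin_cases k <;> simp [hb]
    refine at_sharp (M := 3) ha (by norm_num) ?_
    have v0 : Lnum ![1, b, b+2, b, 1] 0 / Ldeg ![1, b, b+2, b, 1] 0 = 1 := by
      simp [Lnum, Ldeg, Fin.sum_univ_five]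
      omega
    have v1 : Lnum ![1, b, b+2, b, 1] 1 / Ldeg ![1, b, b+2, b, 1] 1 = 1/2 := by
      simp [Lnum, Ldeg, Fin.sum_univ_five]
      rw [div_eq_iff (by linarith)]; ring
    have v2 : Lnum ![1, b, b+2, b, 1] 2 / Ldeg ![1, b, b+2, b, 1] 2 = 0 := by
      simp [Lnum, Ldeg, Fin.sum_univ_five]
      left; ring
    have v3 : Lnum ![1, b, b+2, b, 1] 3 / Ldeg ![1, b, b+2, b, 1] 3 = -1/2 := by
      simp [Lnum, Ldeg, Fin.sum_univ_five]
      rw [div_eq_iff (by linarith)]; ring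
    have v4 : Lnum ![1, b, b+2, b, 1] 4 / Ldeg ![1, b, b+2, b, 1] 4 = -1 := by
      simp [Lnum, Ldeg, Fin.sum_univ_five]
      rw [div_eq_iff (by linarith)]; ring
    intro i j hij
    fin_cases i <;> fin_cases j <;> simp at hij
    all_goals simp [v0, v1, v2, v3, v4]
    all_goals norm_num
  · have hb' : (0:ℝ) < b := by exact_mod_cast hb
    have ha : ∀ k : Fin 7, 0 < (![1, b, 2*b+3, 3*b+1, 2*b+3, b, 1] : Fin 7 → ℕ) k := by
      intro k; fin_cases k <;> simp [hb]
    refine at_sharp (M := 5) ha (by norm_num) ?_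
    generalize hA : (![1, b, 2*b+3, 3*b+1, 2*b+3, b, 1] : Fin 7 → ℕ) = A
    have v0 : Lnum A 0 / Ldeg A 0 = 1 := by
      simp [← hA, Lnum, Ldeg, Fin.sum_univ_seven]
      omega
    have v1 : Lnum A 1 / Ldeg A 1 = 2/3 := by
      simp [← hA, Lnum, Ldeg, Fin.sum_univ_seven]
      rw [div_eq_iff (by linarith)]; ring
    have v2 : Lnum A 2 / Ldeg A 2 = 1/3 := by
      simp [← hA, Lnum, Ldeg, Fin.sum_univ_seven]
      rw [div_eq_iff (by linarith)]; ring
    have v3 : Lnum A 3 / Ldeg A 3 = 0 := by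
      simp [← hA, Lnum, Ldeg, Fin.sum_univ_seven]
      left; ring
    have v4 : Lnum A 4 / Ldeg A 4 = -1/3 := by
      simp [← hA, Lnum, Ldeg, Fin.sum_univ_seven]
      rw [div_eq_iff (by linarith)]; ring
    have v5 : Lnum A 5 / Ldeg A 5 = -2/3 := by
      simp [← hA, Lnum, Ldeg, Fin.sum_univ_seven]
      rw [div_eq_iff (by linarith)]; ring
    have v6 : Lnum A 6 / Ldeg A 6 = -1 := by
      simp [← hA, Lnum, Ldeg, Fin.sum_univ_seven]
      rw [div_eq_iff (by linarith)]; ring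
    intro i j hij
    fin_cases i <;> fin_cases j <;> simp at hij
    all_goals simp [v0, v1, v2, v3, v4, v5, v6]
    all_goals norm_num
  · have := Fintype.card_congr e.toEquiv
    simp [Fin.sum_univ_five] at this
    omega
  · have := Fintype.card_congr e.toEquiv
    simp [Fin.sum_univ_seven] at this
    omega
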